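/- arXiv:2211.03904 — 2 statements merged into one kernel-verified Lean document; each statement's English description precedes it below -/
import Mathlib

section
/- The rescaled solitary-wave profile identity: the function W(ξ) := sech(ξ)⁴ satisfies (1/1680)·W''''(ξ) - (13/420)·W''(ξ) + (12/35)·W(ξ) = (1/2)·W(ξ)² for every ξ ∈ ℝ. -/
/-!
Since `sinh² = cosh² - 1`, the second derivative of `cosh ^ r` is a combination of `cosh ^ r` and
`cosh ^ (r - 2)`, so the second and fourth derivatives of `cosh ^ (-4)` are combinations of the
`-4`th, `-6`th and `-8`th powers of `cosh`. The coefficients of the identity are those that cancel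
the first two of these powers, and the third is the square of `cosh ^ (-4)`.
-/

open Real

section CoshRpow

variable (r x : ℝ)

lemma hasDerivAt_cosh_rpow :
    HasDerivAt (fun y => cosh y ^ r) (r * (sinh x * cosh x ^ (r - 1))) x := by
  refine ((hasDerivAt_cosh x).rpow_const (.inl (cosh_pos x).ne')).congr_deriv ?_
  ring

lemma contDiff_cosh_rpow {n : WithTop ℕ∞} : ContDiff ℝ n fun y => cosh y ^ r :=
  contDiff_cosh.rpow_const_of_ne fun y => (cosh_pos y).ne'

lemma hasDerivAt_sinh_mul_cosh_rpow :
    HasDerivAt (fun y => sinh y * cosh y ^ r)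
      ((r + 1) * cosh x ^ (r + 1) - r * cosh x ^ (r - 1)) x := by
  have hmul_sq : cosh x ^ (r + 1) = cosh x ^ (r - 1) * cosh x ^ 2 := by
    rw [← rpow_add_natCast (cosh_pos x).ne']
    ring_nf
  have hmul : cosh x * cosh x ^ r = cosh x ^ (r + 1) := by
    rw [rpow_add_one (cosh_pos x).ne', mul_comm]
  refine ((hasDerivAt_sinh x).fun_mul (hasDerivAt_cosh_rpow r x)).congr_deriv ?_
  linear_combination hmul - r * hmul_sq - r * cosh x ^ (r - 1) * cosh_sq x

lemma iteratedDeriv_two_cosh_rpow :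
    iteratedDeriv 2 (fun y => cosh y ^ r) x =
      r ^ 2 * cosh x ^ r - r * (r - 1) * cosh x ^ (r - 2) := by
  have hderiv : deriv (fun y => cosh y ^ r) = fun y => r * (sinh y * cosh y ^ (r - 1)) :=
    funext fun y => (hasDerivAt_cosh_rpow r y).deriv
  rw [iteratedDeriv_succ', iteratedDeriv_one, hderiv,
    ((hasDerivAt_sinh_mul_cosh_rpow (r - 1) x).const_mul r).deriv]
  ring_nf

lemma iteratedDeriv_four_cosh_rpow :
    iteratedDeriv 4 (fun y => cosh y ^ r) x =
      r ^ 4 * cosh x ^ r - r * (r - 1) * (r ^ 2 + (r - 2) ^ 2) * cosh x ^ (r - 2) +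
        r * (r - 1) * (r - 2) * (r - 3) * cosh x ^ (r - 4) := by
  have htwo : iteratedDeriv 2 (fun y => cosh y ^ r) =
      fun y => r ^ 2 * cosh y ^ r - r * (r - 1) * cosh y ^ (r - 2) :=
    funext (iteratedDeriv_two_cosh_rpow r)
  calc iteratedDeriv 4 (fun y => cosh y ^ r) x
      = iteratedDeriv 2 (iteratedDeriv 2 fun y => cosh y ^ r) x := by
        simp only [iteratedDeriv_eq_iterate, ← Function.iterate_add_apply]
    _ = iteratedDeriv 2 (fun y => r ^ 2 * cosh y ^ r - r * (r - 1) * cosh y ^ (r - 2)) x := by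
        rw [htwo]
    _ = r ^ 2 * iteratedDeriv 2 (fun y => cosh y ^ r) x -
          r * (r - 1) * iteratedDeriv 2 (fun y => cosh y ^ (r - 2)) x := by
        rw [iteratedDeriv_fun_sub
          (contDiff_const.mul (contDiff_cosh_rpow r)).contDiffAt
          (contDiff_const.mul (contDiff_cosh_rpow (r - 2))).contDiffAt,
          iteratedDeriv_const_mul_field, iteratedDeriv_const_mul_field]
    _ = _ := by
        rw [iteratedDeriv_two_cosh_rpow, iteratedDeriv_two_cosh_rpow]
        ring_nf

end CoshRpow

/-- The rescaled solitary-wave profile identity: `W(ξ) = sech(ξ)⁴` satisfies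
`(1/1680)·W'''' - (13/420)·W'' + (12/35)·W = (1/2)·W²`. -/
theorem rescaled_profile_identity
    (W : ℝ → ℝ) (hW : W = fun ξ => (1 / Real.cosh ξ) ^ 4) :
    ∀ ξ : ℝ,
      (1 / 1680) * deriv^[4] W ξ - (13 / 420) * deriv^[2] W ξ
        + (12 / 35) * W ξ = (1 / 2) * W ξ ^ 2 := by
  intro ξ
  have hW_rpow : W = fun y => cosh y ^ (-4 : ℝ) := by
    rw [hW]
    funext y
    rw [one_div, inv_pow, rpow_neg (cosh_pos y).le, rpow_ofNat]
  have hsq : cosh ξ ^ (-4 - 4 : ℝ) = (cosh ξ ^ (-4 : ℝ)) ^ 2 := by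
    rw [sq, ← rpow_add (cosh_pos ξ), sub_eq_add_neg]
  rw [← iteratedDeriv_eq_iterate, ← iteratedDeriv_eq_iterate, hW_rpow,
    iteratedDeriv_four_cosh_rpow, iteratedDeriv_two_cosh_rpow, hsq]
  ring
end

section
/- Maximal speed of zero-background line solitons in the case σ = 1: let β be a real constant with k := 36·β²/169 > 2, and define c : (-π/2, π/2) → ℝ by c(θ) := -k·cos(θ) - sin(θ)²/cos(θ). Then c(θ) ≤ -2·√(k - 1) for all θ ∈ (-π/2, π/2), and equality holds exactly when θ = arctan(√(k - 2)) or θ = -arctan(√(k - 2)). -/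
open Real

/-!
Put `a = √(k - 1)`. Since `sin² = 1 - cos²`, the speed is `-(a² cos θ + (cos θ)⁻¹)`, and
completing the square gives `a² x + x⁻¹ = 2a + (a x - 1)² / x` for `x = cos θ > 0`. Equality
therefore means `√(k - 1) cos θ = 1`; writing `k - 1 = 1 + t²` with `t = √(k - 2)`, this is
`cos θ = cos (arctan t)`.
-/

section CompletingTheSquare

variable {F : Type*} [Field F] {x : F}

theorem sq_mul_add_inv_sub_two_mul (a : F) (hx : x ≠ 0) :
    a ^ 2 * x + x⁻¹ - 2 * a = (a * x - 1) ^ 2 / x := by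
  field_simp
  ring

theorem sq_mul_add_inv_eq_two_mul_iff {a : F} (hx : x ≠ 0) :
    a ^ 2 * x + x⁻¹ = 2 * a ↔ a * x = 1 := by
  rw [← sub_eq_zero, sq_mul_add_inv_sub_two_mul a hx, div_eq_zero_iff,
    or_iff_left hx, sq_eq_zero_iff, sub_eq_zero]

theorem two_mul_le_sq_mul_add_inv [LinearOrder F] [IsStrictOrderedRing F] (a : F) (hx : 0 < x) :
    2 * a ≤ a ^ 2 * x + x⁻¹ := by
  rw [← sub_nonneg, sq_mul_add_inv_sub_two_mul a hx.ne']
  positivity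

end CompletingTheSquare

theorem cos_eq_cos_iff_eq_or_eq_neg {θ φ : ℝ} (hθ : |θ| ≤ π) (hφ : |φ| ≤ π) :
    cos θ = cos φ ↔ θ = φ ∨ θ = -φ := by
  rw [← abs_eq_abs, ← cos_abs θ, ← cos_abs φ]
  exact injOn_cos.eq_iff ⟨abs_nonneg θ, hθ⟩ ⟨abs_nonneg φ, hφ⟩

theorem sqrt_one_add_sq_mul_cos_eq_one_iff {θ : ℝ} (t : ℝ) (hθ : |θ| ≤ π) :
    √(1 + t ^ 2) * cos θ = 1 ↔ θ = arctan t ∨ θ = -arctan t := by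
  have hsqrt : √(1 + t ^ 2) ≠ 0 := by positivity
  have harctan : |arctan t| ≤ π :=
    (abs_lt.2 (arctan_mem_Ioo t)).le.trans (half_le_self pi_pos.le)
  rw [← cos_eq_cos_iff_eq_or_eq_neg hθ harctan, cos_arctan, eq_div_iff hsqrt, mul_comm]

-- Where `cos θ = 0`, division and inversion by zero make both sides `0`.
theorem sin_sq_div_cos (θ : ℝ) : sin θ ^ 2 / cos θ = (cos θ)⁻¹ - cos θ := by
  rw [sin_sq, sub_div, one_div, sq, mul_self_div_self]

theorem neg_mul_cos_sub_sin_sq_div_cos {k : ℝ} (hk : 1 ≤ k) (θ : ℝ) :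
    -k * cos θ - sin θ ^ 2 / cos θ = -(√(k - 1) ^ 2 * cos θ + (cos θ)⁻¹) := by
  rw [sin_sq_div_cos, sq_sqrt (sub_nonneg.2 hk)]
  ring

/-- Maximal speed of zero-background line solitons in the case `σ = 1`. -/
theorem max_speed_zero_background (β k : ℝ) (hk : k = 36 * β ^ 2 / 169)
    (hk2 : 2 < k)
    (c : ℝ → ℝ) (hc : c = fun θ => -k * Real.cos θ - Real.sin θ ^ 2 / Real.cos θ) :
    ∀ θ ∈ Set.Ioo (-(π / 2)) (π / 2),
      c θ ≤ -2 * Real.sqrt (k - 1) ∧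
        (c θ = -2 * Real.sqrt (k - 1) ↔
          θ = Real.arctan (Real.sqrt (k - 2)) ∨
            θ = -Real.arctan (Real.sqrt (k - 2))) := by
  intro θ hθ
  have hcos : 0 < cos θ := cos_pos_of_mem_Ioo hθ
  have habs : |θ| ≤ π := (abs_lt.2 hθ).le.trans (half_le_self pi_pos.le)
  have hspeed : c θ = -(√(k - 1) ^ 2 * cos θ + (cos θ)⁻¹) := by
    rw [hc]
    exact neg_mul_cos_sub_sin_sq_div_cos (by linarith) θ
  have hk_sub_one : k - 1 = 1 + √(k - 2) ^ 2 := by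
    rw [sq_sqrt (by linarith)]
    ring
  rw [hspeed, neg_mul, neg_le_neg_iff, neg_inj]
  refine ⟨two_mul_le_sq_mul_add_inv _ hcos, ?_⟩
  rw [sq_mul_add_inv_eq_two_mul_iff hcos.ne', hk_sub_one]
  exact sqrt_one_add_sq_mul_cos_eq_one_iff _ habs
end
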